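/- The orbit space 𝓑(n)/GL(n,ℝ) (the Banach–Mazur compactum BM(n)) is a compact metrizable topological space. -/

import Mathlib

open scoped Pointwise
open TopologicalSpace

noncomputable section

/-- `ℝⁿ` with the Euclidean metric. -/
abbrev Euc (n : ℕ) := EuclideanSpace ℝ (Fin n)

/-- `𝓑(n)`: the compact convex bodies of `ℝⁿ` symmetric about the origin, viewed inside
the hyperspace of nonempty compact subsets of `ℝⁿ` carrying the Hausdorff metric. -/
def BodySet (n : ℕ) : Set (NonemptyCompacts (Euc n)) :=
  {K | Convex ℝ (K : Set (Euc n)) ∧ (interior (K : Set (Euc n))).Nonempty ∧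
       (K : Set (Euc n)) = -(K : Set (Euc n))}

/-- An element of `𝓑(n)`, with the (Hausdorff-metric) subspace topology. -/
abbrev Body (n : ℕ) := ↥(BodySet n)

/-- The underlying subset of `ℝⁿ` of a body `A ∈ 𝓑(n)`. -/
def Body.toSet {n : ℕ} (A : Body n) : Set (Euc n) :=
  ((A : NonemptyCompacts (Euc n)) : Set (Euc n))

/-- The image `gA` of a subset `A ⊆ ℝⁿ` under the linear map determined by the matrix
`g`; in particular `g𝔹ⁿ` is the ellipsoid associated to `g ∈ GL(n,ℝ)`. -/
def matImage (n : ℕ) (g : Matrix (Fin n) (Fin n) ℝ) (A : Set (Euc n)) : Set (Euc n) :=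
  (Matrix.toEuclideanLin g) '' A

/-- The closed Euclidean unit ball `𝔹ⁿ`. -/
def unitBall (n : ℕ) : Set (Euc n) := Metric.closedBall 0 1

/-- `J(n)`: the bodies `A ∈ 𝓑(n)` for which `𝔹ⁿ` is the maximal-volume ellipsoid
contained in `A`, i.e. `𝔹ⁿ ⊆ A` and `|det g| ≤ 1` for every `g ∈ GL(n,ℝ)` with
`g𝔹ⁿ ⊆ A`. -/
def Jset (n : ℕ) : Set (Body n) :=
  {A | unitBall n ⊆ A.toSet ∧
       ∀ g : GL (Fin n) ℝ,
         matImage n (g : Matrix (Fin n) (Fin n) ℝ) (unitBall n) ⊆ A.toSet →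
         |(g : Matrix (Fin n) (Fin n) ℝ).det| ≤ 1}

/-- The orbit relation of the natural `GL(n,ℝ)`-action `g·A = gA` on `𝓑(n)`;
the quotient `Quot (glOrbitRel n)` is the orbit space `𝓑(n)/GL(n,ℝ)`,
i.e. the Banach–Mazur compactum `BM(n)`, with the quotient topology. -/
def glOrbitRel (n : ℕ) : Body n → Body n → Prop :=
  fun A B => ∃ g : GL (Fin n) ℝ, matImage n (g : Matrix (Fin n) (Fin n) ℝ) A.toSet = B.toSet

/-! ### Proof -/

open Filter Topology Metric
open scoped Matrix

abbrev EucU (n : ℕ) := (Euc n →L[ℝ] Euc n)ˣ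

theorem bm_rel_iff {n : ℕ} (A B : Body n) :
    glOrbitRel n A B ↔ ∃ u : EucU n, (u : Euc n →L[ℝ] Euc n) '' A.toSet = B.toSet := by
  constructor
  · rintro ⟨g, hg⟩
    refine ⟨Units.map (Matrix.toEuclideanCLM (n := Fin n) (𝕜 := ℝ)).toRingEquiv.toMonoidHom g, ?_⟩
    exact hg
  · rintro ⟨u, hu⟩
    refine ⟨Units.map
      (Matrix.toEuclideanCLM (n := Fin n) (𝕜 := ℝ)).symm.toRingEquiv.toMonoidHom u, ?_⟩
    rw [← hu]
    have : ∀ x, (Matrix.toEuclideanCLM (n := Fin n) (𝕜 := ℝ)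
      ((Matrix.toEuclideanCLM (n := Fin n) (𝕜 := ℝ)).symm (u : Euc n →L[ℝ] Euc n))) x
        = (u : Euc n →L[ℝ] Euc n) x := by
      intro x; rw [StarAlgEquiv.apply_symm_apply]
    exact Set.image_congr fun x _ => this x

theorem bm_inv_apply {n : ℕ} (u : EucU n) (x : Euc n) :
    (↑u⁻¹ : Euc n →L[ℝ] Euc n) ((u : Euc n →L[ℝ] Euc n) x) = x := by
  have := congrArg (fun f : Euc n →L[ℝ] Euc n => f x) u.inv_mul
  exact this

theorem bm_apply_inv {n : ℕ} (u : EucU n) (x : Euc n) :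
    (u : Euc n →L[ℝ] Euc n) ((↑u⁻¹ : Euc n →L[ℝ] Euc n) x) = x := by
  have := congrArg (fun f : Euc n →L[ℝ] Euc n => f x) u.mul_inv
  exact this

theorem bm_isOpenMap {n : ℕ} (u : EucU n) : IsOpenMap (u : Euc n →L[ℝ] Euc n) :=
  IsOpenMap.of_inverse (↑u⁻¹ : Euc n →L[ℝ] Euc n).continuous (bm_apply_inv u) (bm_inv_apply u)

def bmMap {n : ℕ} (u : EucU n) (A : Body n) : Body n :=
  ⟨A.1.map (u : Euc n →L[ℝ] Euc n) (u : Euc n →L[ℝ] Euc n).continuous, by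
    obtain ⟨h1, h2, h3⟩ := A.2
    refine ⟨?_, ?_, ?_⟩
    · rw [NonemptyCompacts.coe_map]
      exact h1.linear_image (u : Euc n →L[ℝ] Euc n).toLinearMap
    · rw [NonemptyCompacts.coe_map]
      exact (h2.image _).mono ((bm_isOpenMap u).image_interior_subset _)
    · rw [NonemptyCompacts.coe_map]
      conv_lhs => rw [h3]
      exact Set.image_neg_of_apply_neg_eq_neg fun x _ => map_neg _ x⟩

theorem bmMap_toSet {n : ℕ} (u : EucU n) (A : Body n) :
    (bmMap u A).toSet = (u : Euc n →L[ℝ] Euc n) '' A.toSet := rfl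

theorem body_ext {n : ℕ} {A B : Body n} (h : A.toSet = B.toSet) : A = B :=
  Subtype.ext (NonemptyCompacts.ext h)

theorem bm_rel_iff' {n : ℕ} (A B : Body n) :
    glOrbitRel n A B ↔ ∃ u : EucU n, bmMap u A = B := by
  rw [bm_rel_iff]
  exact exists_congr fun u => ⟨fun h => body_ext h, fun h => by rw [← h]; rfl⟩

theorem bmMap_mul {n : ℕ} (u v : EucU n) (A : Body n) :
    bmMap u (bmMap v A) = bmMap (u * v) A := by
  apply body_ext
  simp only [bmMap_toSet, Set.image_image]
  rfl

theorem bmMap_one {n : ℕ} (A : Body n) : bmMap 1 A = A := by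
  apply body_ext
  simp [bmMap_toSet]

theorem bm_equiv (n : ℕ) : Equivalence (glOrbitRel n) := by
  refine ⟨fun A => (bm_rel_iff' _ _).2 ⟨1, bmMap_one A⟩, ?_, ?_⟩
  · intro A B h
    obtain ⟨u, rfl⟩ := (bm_rel_iff' _ _).1 h
    exact (bm_rel_iff' _ _).2 ⟨u⁻¹, by rw [bmMap_mul, inv_mul_cancel, bmMap_one]⟩
  · intro A B C h h'
    obtain ⟨u, rfl⟩ := (bm_rel_iff' _ _).1 h
    obtain ⟨v, rfl⟩ := (bm_rel_iff' _ _).1 h'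
    exact (bm_rel_iff' _ _).2 ⟨v * u, by rw [bmMap_mul]⟩

theorem bm_mk_eq {n : ℕ} (A B : Body n) :
    Quot.mk (glOrbitRel n) A = Quot.mk (glOrbitRel n) B ↔ glOrbitRel n A B := by
  rw [Quot.eq, (bm_equiv n).eqvGen_iff]

theorem bmMap_continuous {n : ℕ} (u : EucU n) : Continuous (bmMap u) :=
  Continuous.subtype_mk
    ((Continuous.nonemptyCompacts_map (u : Euc n →L[ℝ] Euc n).continuous).comp
      continuous_subtype_val) _

theorem bm_openQuotient (n : ℕ) : IsOpenQuotientMap (Quot.mk (glOrbitRel n)) := by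
  refine ⟨Quot.mk_surjective, continuous_quot_mk, fun U hU => ?_⟩
  rw [← isQuotientMap_quot_mk.isOpen_preimage]
  have : Quot.mk (glOrbitRel n) ⁻¹' (Quot.mk (glOrbitRel n) '' U) =
      ⋃ u : EucU n, bmMap u ⁻¹' U := by
    ext A
    simp only [Set.mem_preimage, Set.mem_image, Set.mem_iUnion]
    constructor
    · rintro ⟨B, hB, h⟩
      obtain ⟨u, rfl⟩ := (bm_rel_iff' _ _).1 ((bm_mk_eq _ _).1 h.symm)
      exact ⟨u, hB⟩
    · rintro ⟨u, hu⟩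
      exact ⟨_, hu, ((bm_mk_eq _ _).2 ((bm_rel_iff' _ _).2 ⟨u, rfl⟩)).symm⟩
  rw [this]
  exact isOpen_iUnion fun u => hU.preimage (bmMap_continuous u)

/-- A body contains a ball around the origin. -/
theorem bm_exists_ball {n : ℕ} (A : Body n) : ∃ r > 0, closedBall (0 : Euc n) r ⊆ A.toSet := by
  obtain ⟨h1, ⟨x, hx⟩, h3⟩ := A.2
  have hnx : -x ∈ interior (A.1 : Set (Euc n)) := by
    have h := (Homeomorph.neg (Euc n)).image_interior (A.1 : Set (Euc n))
    have h' : (Homeomorph.neg (Euc n)) '' (A.1 : Set (Euc n)) = (A.1 : Set (Euc n)) := by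
      conv_rhs => rw [h3]
      exact Set.image_neg_eq_neg
    rw [h'] at h
    rw [← h]
    exact ⟨x, hx, rfl⟩
  have h0 : (0 : Euc n) ∈ interior (A.1 : Set (Euc n)) := by
    have := h1.interior hx hnx (a := 1/2) (b := 1/2) (by norm_num) (by norm_num) (by norm_num)
    simpa using this
  obtain ⟨r, hr, h⟩ := nhds_basis_closedBall.mem_iff.1 (mem_interior_iff_mem_nhds.1 h0)
  exact ⟨r, hr, h⟩

/-- Convex sets Hausdorff-close to a set containing a large ball contain a smaller ball. -/
theorem bm_ball_stable {n : ℕ} {r : ℝ} (hr : 0 < r) (A B : Body n)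
    (hA : closedBall (0 : Euc n) (2 * r) ⊆ A.toSet) (hd : dist A B < r) :
    closedBall (0 : Euc n) r ⊆ B.toSet := by
  intro x hx
  by_contra hxB
  obtain ⟨f, s, hf1, hf2⟩ := geometric_hahn_banach_closed_point B.2.1
    B.1.isCompact.isClosed hxB
  obtain ⟨v, rfl⟩ := (InnerProductSpace.toDual ℝ (Euc n)).surjective f
  simp only [InnerProductSpace.toDual_apply_apply] at hf1 hf2
  have hBne := B.1.nonempty
  have hv : v ≠ 0 := by
    rintro rfl
    obtain ⟨b, hb⟩ := hBne
    have := hf1 b hb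
    simp at this hf2
    linarith
  have hvn : 0 < ‖v‖ := norm_pos_iff.2 hv
  have hpA : (2 * r / ‖v‖) • v ∈ A.toSet := by
    apply hA
    rw [mem_closedBall_zero_iff, norm_smul, Real.norm_eq_abs, abs_of_pos (by positivity)]
    field_simp
    rfl
  obtain ⟨b, hb, hdb⟩ := exists_dist_lt_of_hausdorffDist_lt (s := A.toSet) (t := B.toSet) hpA hd
    (hausdorffEDist_ne_top_of_nonempty_of_bounded A.1.nonempty B.1.nonempty
      A.1.isCompact.isBounded B.1.isCompact.isBounded)
  have h1 := hf1 b hb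
  have h2 : inner ℝ v x ≤ ‖v‖ * r :=
    (real_inner_le_norm v x).trans (by gcongr; simpa using hx)
  have h3 : inner ℝ v ((2 * r / ‖v‖) • v - b) ≤ ‖v‖ * r :=
    (real_inner_le_norm _ _).trans (by gcongr; rw [← dist_eq_norm]; exact hdb.le)
  rw [inner_sub_right, inner_smul_right, real_inner_self_eq_norm_sq] at h3
  have : 2 * r / ‖v‖ * ‖v‖ ^ 2 = 2 * (‖v‖ * r) := by field_simp
  linarith

theorem bm_norm_le {n : ℕ} {r R : ℝ} (hr : 0 < r) (hR : 0 < R) (f : Euc n →L[ℝ] Euc n)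
    {A B : Set (Euc n)} (hA : closedBall 0 r ⊆ A) (hB : B ⊆ ball 0 R) (h : f '' A ⊆ B) :
    ‖f‖ ≤ R / r := by
  refine f.opNorm_le_bound (by positivity) fun x => ?_
  by_cases hx : x = 0
  · simp [hx]
  have hxn : 0 < ‖x‖ := norm_pos_iff.2 hx
  have : f ((r / ‖x‖) • x) ∈ ball (0 : Euc n) R := by
    refine hB (h ⟨_, hA ?_, rfl⟩)
    rw [mem_closedBall_zero_iff, norm_smul, Real.norm_eq_abs, abs_of_pos (by positivity)]
    field_simp
    rfl
  rw [mem_ball_zero_iff, map_smul, norm_smul, Real.norm_eq_abs, abs_of_pos (by positivity)] at this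
  rw [div_mul_eq_mul_div, div_lt_iff₀ hxn] at this
  rw [div_mul_eq_mul_div, le_div_iff₀ hr]
  linarith

theorem bm_isClosed_rel (n : ℕ) : IsClosed {p : Body n × Body n | glOrbitRel n p.1 p.2} := by
  apply IsSeqClosed.isClosed
  rintro x ⟨A, B⟩ hx hlim
  have hA : Tendsto (fun k => (x k).1) atTop (𝓝 A) := (continuous_fst.tendsto _).comp hlim
  have hB : Tendsto (fun k => (x k).2) atTop (𝓝 B) := (continuous_snd.tendsto _).comp hlim
  choose u hu using fun k => (bm_rel_iff' _ _).1 (hx k)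
  have key : ∀ (y : ℕ → Body n) (C : Body n), Tendsto y atTop (𝓝 C) →
      ∃ r > 0, ∃ R > 0, ∀ᶠ k in atTop, closedBall 0 r ⊆ (y k).toSet ∧ (y k).toSet ⊆ ball 0 R := by
    intro y C hy
    obtain ⟨r, hr, h⟩ := bm_exists_ball C
    obtain ⟨R, hR0, hR⟩ := C.1.isCompact.isBounded.subset_ball_lt 0 0
    refine ⟨r / 2, by positivity, R, hR0, ?_⟩
    have h1 : ∀ᶠ k in atTop, dist C (y k) < r / 2 := by
      filter_upwards [hy.eventually (ball_mem_nhds C (half_pos hr))] with k hk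
      rw [dist_comm]; exact hk
    have h2 : ∀ᶠ k in atTop, (y k).toSet ⊆ ball 0 R :=
      hy.eventually (((NonemptyCompacts.isOpen_subsets_of_isOpen
        (isOpen_ball (x := (0 : Euc n)) (ε := R))).preimage continuous_subtype_val).mem_nhds hR)
    filter_upwards [h1, h2] with k h1 h2
    refine ⟨bm_ball_stable (by positivity) C _ ?_ h1, h2⟩
    convert h using 2; ring
  obtain ⟨r, hr, R, hR, h1⟩ := key _ _ hA
  obtain ⟨r', hr', R', hR', h2⟩ := key _ _ hB
  let p : ℕ → (Euc n →L[ℝ] Euc n) × (Euc n →L[ℝ] Euc n) := fun k => (↑(u k), ↑(u k)⁻¹)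
  have hp : ∀ᶠ k in atTop, p k ∈ closedBall (0 : Euc n →L[ℝ] Euc n) (R' / r) ×ˢ
      closedBall (0 : Euc n →L[ℝ] Euc n) (R / r') := by
    filter_upwards [h1, h2] with k h1 h2
    refine ⟨?_, ?_⟩
    · rw [mem_closedBall_zero_iff]
      refine bm_norm_le hr hR' _ h1.1 h2.2 ?_
      rw [← hu k]; exact subset_rfl
    · rw [mem_closedBall_zero_iff]
      refine bm_norm_le hr' hR _ h2.1 h1.2 ?_
      rw [← hu k, bmMap_toSet, Set.image_image]
      rintro _ ⟨z, hz, rfl⟩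
      have := bm_inv_apply (u k) z
      change (↑(u k)⁻¹ : Euc n →L[ℝ] Euc n) ((u k : Euc n →L[ℝ] Euc n) z) ∈ _
      rw [this]; exact hz
  obtain ⟨⟨f, g⟩, -, φ, hφ, hlimp⟩ :=
    ((isCompact_closedBall (0 : Euc n →L[ℝ] Euc n) (R' / r)).prod
      (isCompact_closedBall (0 : Euc n →L[ℝ] Euc n) (R / r'))).tendsto_subseq' hp.frequently
  have hf : Tendsto (fun k => (u (φ k) : Euc n →L[ℝ] Euc n)) atTop (𝓝 f) :=
    (continuous_fst.tendsto _).comp hlimp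
  have hg : Tendsto (fun k => (↑(u (φ k))⁻¹ : Euc n →L[ℝ] Euc n)) atTop (𝓝 g) :=
    (continuous_snd.tendsto _).comp hlimp
  have hfg : f * g = 1 := tendsto_nhds_unique (hf.mul hg) (by simp)
  have hgf : g * f = 1 := tendsto_nhds_unique (hg.mul hf) (by simp)
  let F : (Euc n →L[ℝ] Euc n) × NonemptyCompacts (Euc n) → NonemptyCompacts (Euc n) :=
    fun q => q.2.map q.1 q.1.continuous
  have hF : Continuous F :=
    Continuous.nonemptyCompacts_map' (g := fun (q : (Euc n →L[ℝ] Euc n) × _) x => q.1 x)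
      continuous_snd (by fun_prop)
  refine (bm_rel_iff' _ _).2 ⟨⟨f, g, hfg, hgf⟩, Subtype.ext ?_⟩
  have hA' : Tendsto (fun k => (x (φ k)).1.1) atTop (𝓝 A.1) :=
    (continuous_subtype_val.tendsto _).comp (hA.comp hφ.tendsto_atTop)
  have hB' : Tendsto (fun k => (x (φ k)).2.1) atTop (𝓝 B.1) :=
    (continuous_subtype_val.tendsto _).comp (hB.comp hφ.tendsto_atTop)
  have hFl : Tendsto (fun k => F ((u (φ k) : Euc n →L[ℝ] Euc n), (x (φ k)).1.1)) atTop
      (𝓝 (F (f, A.1))) := (hF.tendsto _).comp (hf.prodMk_nhds hA')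
  refine tendsto_nhds_unique hFl (hB'.congr fun k => ?_)
  rw [← hu (φ k)]; rfl

/-- Auerbach's lemma: every body can be moved to a position between the cross-polytope and the
cube. -/
theorem bm_auerbach {n : ℕ} (A : Body n) : ∃ u : EucU n,
    (∀ i, EuclideanSpace.single i (1 : ℝ) ∈ (bmMap u A).toSet) ∧
    ∀ x ∈ (bmMap u A).toSet, ∀ i, |x i| ≤ 1 := by
  classical
  let D : (Fin n → Euc n) → ℝ := fun a => |(Matrix.of fun i j => a i j).det|
  have hD : Continuous D := by
    refine continuous_abs.comp (Continuous.matrix_det ?_)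
    refine continuous_matrix fun i j => ?_
    simp only [Matrix.of_apply]
    fun_prop
  obtain ⟨a, ha, hmax⟩ := (isCompact_univ_pi fun _ : Fin n => A.1.isCompact).exists_isMaxOn
    (Set.univ_pi_nonempty_iff.2 fun _ => A.1.nonempty) hD.continuousOn
  have haA : ∀ i, a i ∈ A.toSet := fun i => ha i (Set.mem_univ i)
  set M : Matrix (Fin n) (Fin n) ℝ := Matrix.of fun i j => a i j with hM
  have hdet : M.det ≠ 0 := by
    obtain ⟨r, hr, h⟩ := bm_exists_ball A
    have h1 : D (fun i => EuclideanSpace.single i r) ≤ D a := by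
      apply hmax
      intro i _
      apply h
      simp [abs_of_pos hr]
    have h2 : (Matrix.of fun i j => (EuclideanSpace.single i r : Euc n) j) =
        (Matrix.diagonal fun _ : Fin n => r) := by
      ext i j
      by_cases hij : i = j
      · subst hij; simp
      · simp [Matrix.diagonal_apply_ne _ hij, Ne.symm hij]
    have h3 : 0 < D (fun i => EuclideanSpace.single i r) := by
      simp only [D]
      rw [h2, Matrix.det_diagonal]
      simp only [Finset.prod_const]
      positivity
    exact abs_pos.1 (h3.trans_le h1)
  have hdetT : IsUnit Mᵀ.det := by rw [Matrix.det_transpose]; exact hdet.isUnit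
  let Φ := Matrix.toEuclideanCLM (n := Fin n) (𝕜 := ℝ)
  let u : EucU n := ⟨Φ Mᵀ⁻¹, Φ Mᵀ,
    by rw [← map_mul, Matrix.nonsing_inv_mul _ hdetT, map_one],
    by rw [← map_mul, Matrix.mul_nonsing_inv _ hdetT, map_one]⟩
  refine ⟨u, fun i => ⟨a i, haA i, ?_⟩, ?_⟩
  · have : a i = Φ Mᵀ (EuclideanSpace.single i (1 : ℝ)) := by
      ext j
      simp [Φ, Matrix.ofLp_toEuclideanCLM, hM]
    rw [this]
    exact bm_inv_apply u⁻¹ _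
  · rintro _ ⟨x, hx, rfl⟩ i
    set y := (u : Euc n →L[ℝ] Euc n) x with hy
    have hxy : x = Φ Mᵀ y := (bm_inv_apply u x).symm
    have hcr : (Mᵀ.cramer x) i = M.det * y i := by
      rw [Matrix.cramer_eq_adjugate_mulVec, hxy]
      simp only [Φ, Matrix.ofLp_toEuclideanCLM]
      rw [Matrix.mulVec_mulVec, Matrix.adjugate_mul, Matrix.det_transpose, Matrix.smul_mulVec,
        Matrix.one_mulVec]
      rfl
    rw [Matrix.cramer_transpose_apply] at hcr
    have h1 : D (Function.update a i x) ≤ D a := by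
      apply hmax
      intro j _
      by_cases hj : j = i
      · subst hj; simpa using hx
      · rw [Function.update_of_ne hj]; exact haA j
    have h2 : (Matrix.of fun k j => (Function.update a i x) k j) = M.updateRow i x := by
      ext k j
      by_cases hk : k = i
      · subst hk; simp
      · simp [hk, hM]
    simp only [D] at h1
    rw [h2, hcr, abs_mul] at h1
    exact le_of_mul_le_mul_left (by simpa using h1) (abs_pos.2 hdet)

theorem bm_infDist_continuous {n : ℕ} (x : Euc n) :
    Continuous fun K : NonemptyCompacts (Euc n) => infDist x (K : Set (Euc n)) :=
  (lipschitz_infDist_set x).continuous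

theorem bm_mem_iff {n : ℕ} (K : NonemptyCompacts (Euc n)) (x : Euc n) :
    x ∈ (K : Set (Euc n)) ↔ infDist x (K : Set (Euc n)) = 0 :=
  K.isCompact.isClosed.mem_iff_infDist_zero K.nonempty

theorem bm_isClosed_convex (n : ℕ) :
    IsClosed {K : NonemptyCompacts (Euc n) | Convex ℝ (K : Set (Euc n))} := by
  have : {K : NonemptyCompacts (Euc n) | Convex ℝ (K : Set (Euc n))} =
      ⋂ (x : Euc n) (y : Euc n) (a : ℝ) (b : ℝ) (_ : 0 ≤ a) (_ : 0 ≤ b) (_ : a + b = 1),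
        {K : NonemptyCompacts (Euc n) | infDist (a • x + b • y) (K : Set (Euc n)) ≤
          a * infDist x (K : Set (Euc n)) + b * infDist y (K : Set (Euc n))} := by
    ext K
    simp only [Set.mem_ofPred_eq, Set.mem_iInter]
    constructor
    · intro h x y a b ha hb hab
      obtain ⟨p, hp, hxp⟩ := K.isCompact.exists_infDist_eq_dist K.nonempty x
      obtain ⟨q, hq, hyq⟩ := K.isCompact.exists_infDist_eq_dist K.nonempty y
      refine (infDist_le_dist_of_mem (h hp hq ha hb hab)).trans ?_
      rw [hxp, hyq]
      refine (dist_add_add_le _ _ _ _).trans ?_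
      rw [dist_smul₀, dist_smul₀, Real.norm_of_nonneg ha, Real.norm_of_nonneg hb]
    · intro h x hx y hy a b ha hb hab
      have := h x y a b ha hb hab
      rw [(bm_mem_iff K x).1 hx, (bm_mem_iff K y).1 hy] at this
      rw [bm_mem_iff]
      exact le_antisymm (by simpa using this) infDist_nonneg
  rw [this]
  refine isClosed_iInter fun x => isClosed_iInter fun y => isClosed_iInter fun a =>
    isClosed_iInter fun b => isClosed_iInter fun _ => isClosed_iInter fun _ =>
    isClosed_iInter fun _ => ?_
  exact isClosed_le (bm_infDist_continuous _) ((continuous_const.mul (bm_infDist_continuous _)).add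
    (continuous_const.mul (bm_infDist_continuous _)))

theorem bm_isClosed_mem {n : ℕ} (x : Euc n) :
    IsClosed {K : NonemptyCompacts (Euc n) | x ∈ (K : Set (Euc n))} := by
  simp only [bm_mem_iff]
  exact isClosed_eq (bm_infDist_continuous x) continuous_const

theorem bm_isClosed_symm (n : ℕ) :
    IsClosed {K : NonemptyCompacts (Euc n) | (K : Set (Euc n)) = -(K : Set (Euc n))} := by
  have h : IsClosed {K : NonemptyCompacts (Euc n) | K = K.map (fun x => -x) continuous_neg} :=
    isClosed_eq continuous_id (Continuous.nonemptyCompacts_map continuous_neg)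
  have e : {K : NonemptyCompacts (Euc n) | (K : Set (Euc n)) = -(K : Set (Euc n))} =
      {K : NonemptyCompacts (Euc n) | K = K.map (fun x => -x) continuous_neg} := by
    ext K
    simp only [Set.mem_ofPred_eq]
    have hm : (K.map (fun x => -x) continuous_neg : Set (Euc n)) = -(K : Set (Euc n)) := by
      rw [NonemptyCompacts.coe_map, Set.image_neg_eq_neg]
    rw [← hm]
    exact SetLike.coe_set_eq
  rw [e]
  exact h

/-- A symmetric convex set containing the standard basis contains a ball. -/
theorem bm_ball_subset {n : ℕ} {K : Set (Euc n)} (hK : Convex ℝ K) (hs : K = -K)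
    (hne : K.Nonempty) (he : ∀ i, EuclideanSpace.single i (1 : ℝ) ∈ K) :
    closedBall (0 : Euc n) (1 / (n + 1 : ℝ)) ⊆ K := by
  have hneg : ∀ x ∈ K, -x ∈ K := fun x hx => by rw [hs]; simpa using hx
  have h0 : (0 : Euc n) ∈ K := by
    obtain ⟨x, hx⟩ := hne
    have := hK hx (hneg x hx) (a := 1/2) (b := 1/2) (by norm_num) (by norm_num) (by norm_num)
    simpa using this
  intro x hx
  rw [mem_closedBall_zero_iff] at hx
  rcases Nat.eq_zero_or_pos n with hn | hn
  · subst hn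
    rwa [Subsingleton.elim x 0]
  have hn' : (0 : ℝ) < n := by exact_mod_cast hn
  have hmem : ∀ i, EuclideanSpace.single i (n * x i) ∈ K := by
    intro i
    have h1 : |(n : ℝ) * x i| ≤ 1 := by
      rw [abs_mul, abs_of_pos hn']
      have h2 : |x i| ≤ ‖x‖ := PiLp.norm_apply_le x i
      have h3 : |x i| ≤ 1 / (n + 1 : ℝ) := h2.trans hx
      calc (n : ℝ) * |x i| ≤ n * (1 / (n + 1 : ℝ)) := by gcongr
        _ ≤ 1 := by rw [mul_one_div, div_le_one (by positivity)]; linarith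
    obtain ⟨h2, h3⟩ := abs_le.1 h1
    have := hK (he i) (hneg _ (he i)) (a := (1 + n * x i) / 2) (b := (1 - n * x i) / 2)
      (by linarith) (by linarith) (by ring)
    convert this using 1
    ext j
    by_cases hj : j = i
    · subst hj; simp; ring
    · simp [hj]
  have := hK.sum_mem (t := Finset.univ) (w := fun _ : Fin n => (1 / n : ℝ))
    (z := fun i => EuclideanSpace.single i (n * x i)) (fun _ _ => by positivity)
    (by simp; field_simp) (fun i _ => hmem i)
  convert this using 1
  ext j
  simp [Finset.sum_apply, Pi.single_apply]
  field_simp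

def bmC (n : ℕ) : Set (Body n) :=
  {A | (∀ i, EuclideanSpace.single i (1 : ℝ) ∈ A.toSet) ∧ A.toSet ⊆ closedBall 0 (n : ℝ)}

theorem bmC_compact (n : ℕ) : IsCompact (bmC n) := by
  rw [Subtype.isCompact_iff]
  have : (Subtype.val '' bmC n : Set (NonemptyCompacts (Euc n))) =
      {K : NonemptyCompacts (Euc n) | (K : Set (Euc n)) ⊆ closedBall 0 (n : ℝ)} ∩
      ({K : NonemptyCompacts (Euc n) | Convex ℝ (K : Set (Euc n))} ∩ ({K : NonemptyCompacts (Euc n) | (K : Set (Euc n)) = -(K : Set (Euc n))} ∩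
      ⋂ i : Fin n, {K : NonemptyCompacts (Euc n) | EuclideanSpace.single i (1 : ℝ) ∈ (K : Set (Euc n))})) := by
    ext K
    simp only [Set.mem_image, Set.mem_inter_iff, Set.mem_ofPred_eq, Set.mem_iInter]
    constructor
    · rintro ⟨A, hA, rfl⟩
      exact ⟨hA.2, A.2.1, A.2.2.2, hA.1⟩
    · rintro ⟨h1, h2, h3, h4⟩
      refine ⟨⟨K, h2, ?_, h3⟩, ⟨h4, h1⟩, rfl⟩
      refine ⟨0, mem_interior_iff_mem_nhds.2 (Filter.mem_of_superset
        (closedBall_mem_nhds _ ?_) (bm_ball_subset h2 h3 K.nonempty h4))⟩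
      positivity
  rw [this]
  exact (NonemptyCompacts.isCompact_subsets_of_isCompact (isCompact_closedBall _ _)).inter_right
    ((bm_isClosed_convex n).inter ((bm_isClosed_symm n).inter
      (isClosed_iInter fun i => bm_isClosed_mem _)))

theorem bm_compactSpace (n : ℕ) : CompactSpace (Quot (glOrbitRel n)) := by
  have : Quot.mk (glOrbitRel n) '' bmC n = Set.univ := by
    rw [Set.eq_univ_iff_forall]
    rintro ⟨A⟩
    obtain ⟨u, h1, h2⟩ := bm_auerbach A
    refine ⟨bmMap u A, ⟨h1, fun x hx => ?_⟩,
      ((bm_mk_eq _ _).2 ((bm_rel_iff' _ _).2 ⟨u, rfl⟩)).symm⟩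
    rw [mem_closedBall_zero_iff]
    have h3 : ‖x‖ ^ 2 ≤ (n : ℝ) ^ 2 := by
      rw [EuclideanSpace.norm_sq_eq]
      calc ∑ i, ‖x i‖ ^ 2 ≤ ∑ _i : Fin n, (1 : ℝ) :=
            Finset.sum_le_sum fun i _ => pow_le_one₀ (norm_nonneg _) (h2 x hx i)
        _ = (n : ℝ) := by simp
        _ ≤ (n : ℝ) ^ 2 := by exact_mod_cast Nat.le_self_pow two_ne_zero n
    exact (sq_le_sq₀ (norm_nonneg _) (by positivity)).1 h3
  exact ⟨this ▸ (bmC_compact n).image continuous_quot_mk⟩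

/-- The Banach–Mazur compactum `BM(n) = 𝓑(n)/GL(n,ℝ)` is a compact
metrizable space. -/
theorem banach_mazur_compact_metrizable (n : ℕ) :
    CompactSpace (Quot (glOrbitRel n)) ∧ MetrizableSpace (Quot (glOrbitRel n)) := by
  have := bm_compactSpace n
  refine ⟨inferInstance, ?_⟩
  have : T2Space (Quot (glOrbitRel n)) := by
    rw [t2Space_iff_of_isOpenQuotientMap (bm_openQuotient n)]
    simp only [bm_mk_eq]
    exact bm_isClosed_rel n
  have : SecondCountableTopology (Quot (glOrbitRel n)) :=
    (bm_openQuotient n).isQuotientMap.secondCountableTopology (bm_openQuotient n).isOpenMap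
  exact metrizableSpace_of_t3_secondCountable _

end
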